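/- Let (E,q) be a formed space and let U, W₁, W₂ be isotropic subspaces of E each containing R(E). Suppose dim W₁ = dim W₂ and W₁ + U^⊥ = W₂ + U^⊥ = E. Then there exists a bijective isometry g : E → E with g(W₁) = W₂ and g|_U = id_U. -/

import Mathlib

/-!
The isometry is built as a product of elementary isometries fixing `U` pointwise, each of which
enlarges `W₁ ∩ W₂`.

Only multiples of isotropic vectors matter, so `Λ` may first be replaced by its largest subgroup
stable under all `x ↦ σ a * x * a`: this changes neither the isotropic subspaces nor the hypotheses
on the radical, and an isometry for the smaller subgroup is one for `Λ` (this is done in the proof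
of `stmt17`). Two families of isometries are then available:

* the quasi-reflections `x ↦ x + (b⁻¹ ω(v,x)) v`, where `b ≠ 0` and `q(v,v) + b ∈ Λ`;
* the Eichler transformations attached to an isotropic `v` and a `z ⊥ v`.

Call `w₁ ∈ W₁`, `w₂ ∈ W₂` a *compatible pair* if `v = w₂ - w₁` lies in `U^⊥`. If some compatible
pair has `ω(w₂,w₁) ≠ 0`, the quasi-reflection along `v` with `b = ω(w₂,w₁)` sends `w₁` to `w₂` and
fixes `U` and `W₁ ∩ W₂`. Otherwise one picks a compatible pair with `w₁ ∉ W₂`, `w₂ ∉ W₁`, and an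
Eichler transformation does the same, provided there is `z ⊥ W₁ ∩ W₂, U, v` with `ω(z,w₁) = 1`.
By duality (`FS.exists_dual`) such a `z` exists unless `w₁ ∈ (W₁ ∩ W₂) + U + F v + K(E)`, and this is
excluded using that an isotropic subspace containing `R(E)` meets `K(E)` exactly in `R(E)`.
The step is `FS.exists_move`, and `FS.witt` iterates it.
-/

/-- A sesquilinear form with respect to the involution `σ`:
biadditive and `q (a • v) (b • w) = σ a * q v w * b`. -/
def IsSesq {F E : Type*} [Field F] [AddCommGroup E] [Module F E]
    (σ : F →+* F) (q : E → E → F) : Prop :=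
  (∀ v v' w : E, q (v + v') w = q v w + q v' w) ∧
  (∀ v w w' : E, q v (w + w') = q v w + q v w') ∧
  ∀ (a b : F) (v w : E), q (a • v) (b • w) = σ a * q v w * b

/-- `ω_q(v,w) = q(v,w) + ε·σ(q(w,v))`. -/
def omegaF {F E : Type*} [Field F] [AddCommGroup E] [Module F E]
    (σ : F →+* F) (ε : F) (q : E → E → F) (v w : E) : F :=
  q v w + ε * σ (q w v)

/-- The orthogonal complement of a set `S ⊆ E`: `{v : ω_q(v,u) = 0 for all u ∈ S}`. -/
def perpSet {F E : Type*} [Field F] [AddCommGroup E] [Module F E]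
    (σ : F →+* F) (ε : F) (q : E → E → F) (S : Set E) : Set E :=
  {v : E | ∀ u ∈ S, omegaF σ ε q v u = 0}

/-- The radical `R(E) = {v ∈ K(E) : q(v,v) ∈ Λ}` of a formed space (as a set). -/
def radSet {F E : Type*} [Field F] [AddCommGroup E] [Module F E]
    (σ : F →+* F) (ε : F) (q : E → E → F) (Λ : Set F) : Set E :=
  {v : E | (∀ w : E, omegaF σ ε q w v = 0) ∧ q v v ∈ Λ}

/-- A subspace `U` is isotropic if `ω_q` vanishes on `U` and `q(u,u) ∈ Λ` for `u ∈ U`. -/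
def IsIsotropic {F E : Type*} [Field F] [AddCommGroup E] [Module F E]
    (σ : F →+* F) (ε : F) (q : E → E → F) (Λ : Set F) (U : Submodule F E) : Prop :=
  (∀ u ∈ U, ∀ u' ∈ U, omegaF σ ε q u u' = 0) ∧ ∀ u ∈ U, q u u ∈ Λ

/-- The standing hypotheses on `(σ, ε, Λ, q)`, together with the stability of `Λ` under
`x ↦ σ a * x * a`, which makes `Λ` a form parameter in the usual sense. -/
structure FS {F E : Type*} [Field F] [AddCommGroup E] [Module F E]
    (σ : F →+* F) (ε : F) (Λ : AddSubgroup F) (q : E → E → F) : Prop where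
  invol : ∀ a : F, σ (σ a) = a
  unit : ε * σ ε = 1
  hmin : ∀ a : F, a - ε * σ a ∈ Λ
  hmax : ∀ a ∈ Λ, a + ε * σ a = 0
  stable : ∀ a : F, ∀ x ∈ Λ, σ a * x * a ∈ Λ
  sesq : IsSesq σ q

/-- A linear map preserving `ω_q`, and preserving `q(v,v)` modulo `Λ`. -/
def IsIsom {F E : Type*} [Field F] [AddCommGroup E] [Module F E]
    (σ : F →+* F) (ε : F) (Λ : AddSubgroup F) (q : E → E → F) (g : E →ₗ[F] E) : Prop :=
  (∀ v v' : E, omegaF σ ε q (g v) (g v') = omegaF σ ε q v v') ∧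
    ∀ v : E, q (g v) (g v) - q v v ∈ Λ

namespace FS

variable {F E : Type*} [Field F] [AddCommGroup E] [Module F E]
  {σ : F →+* F} {ε : F} {Λ : AddSubgroup F} {q : E → E → F}

/-! ### Sesquilinear calculus -/

lemma q_smul_right (h : FS σ ε Λ q) (v w : E) (b : F) : q v (b • w) = q v w * b := by
  simpa using h.sesq.2.2 1 b v w

lemma q_smul_left (h : FS σ ε Λ q) (v w : E) (a : F) : q (a • v) w = σ a * q v w := by
  simpa using h.sesq.2.2 a 1 v w

lemma add_left (h : FS σ ε Λ q) (v v' w : E) :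
    omegaF σ ε q (v + v') w = omegaF σ ε q v w + omegaF σ ε q v' w := by
  simp only [omegaF, h.sesq.1, h.sesq.2.1, map_add]; ring

lemma add_right (h : FS σ ε Λ q) (v w w' : E) :
    omegaF σ ε q v (w + w') = omegaF σ ε q v w + omegaF σ ε q v w' := by
  simp only [omegaF, h.sesq.1, h.sesq.2.1, map_add]; ring

lemma smul_left (h : FS σ ε Λ q) (a : F) (v w : E) :
    omegaF σ ε q (a • v) w = σ a * omegaF σ ε q v w := by
  simp only [omegaF, h.q_smul_left, h.q_smul_right, map_mul]; ring

lemma smul_right (h : FS σ ε Λ q) (a : F) (v w : E) :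
    omegaF σ ε q v (a • w) = omegaF σ ε q v w * a := by
  simp only [omegaF, h.q_smul_left, h.q_smul_right, map_mul, h.invol]; ring

lemma symm (h : FS σ ε Λ q) (v w : E) :
    omegaF σ ε q v w = ε * σ (omegaF σ ε q w v) := by
  simp only [omegaF, map_add, map_mul, h.invol]
  linear_combination (-(q v w)) * h.unit

lemma symm_zero (h : FS σ ε Λ q) {v w : E} (hvw : omegaF σ ε q v w = 0) :
    omegaF σ ε q w v = 0 := by
  rw [h.symm, hvw]; simp

lemma sub_left (h : FS σ ε Λ q) (v v' w : E) :
    omegaF σ ε q (v - v') w = omegaF σ ε q v w - omegaF σ ε q v' w := by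
  have := h.add_left (v - v') v' w
  rw [sub_add_cancel] at this; rw [this]; ring

lemma sub_right (h : FS σ ε Λ q) (v w w' : E) :
    omegaF σ ε q v (w - w') = omegaF σ ε q v w - omegaF σ ε q v w' := by
  have := h.add_right v (w - w') w'
  rw [sub_add_cancel] at this; rw [this]; ring

/-- `v ↦ q(v,v)` is quadratic modulo `Λ`, with polar form `ω_q`; here the deviation from that is
exactly of the form `a - ε σ(a)`. -/
lemma q_add (h : FS σ ε Λ q) (x y : E) :
    q (x + y) (x + y) - q x x - (q y y + omegaF σ ε q y x) ∈ Λ := by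
  have e : q (x + y) (x + y) - q x x - (q y y + omegaF σ ε q y x)
      = q x y - ε * σ (q x y) := by
    simp only [omegaF, h.sesq.1, h.sesq.2.1]; ring
  rw [e]; exact h.hmin _

lemma isotropic_add (h : FS σ ε Λ q) {x y : E} (hx : q x x ∈ Λ) (hy : q y y ∈ Λ)
    (hxy : omegaF σ ε q y x = 0) : q (x + y) (x + y) ∈ Λ := by
  have := Λ.add_mem (Λ.add_mem (h.q_add x y) hx) hy
  rw [hxy] at this
  convert this using 1; ring

lemma isotropic_smul (h : FS σ ε Λ q) {x : E} (a : F) (hx : q x x ∈ Λ) :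
    q (a • x) (a • x) ∈ Λ := by
  rw [h.sesq.2.2]; exact h.stable a _ hx

lemma omega_self_of_mem (h : FS σ ε Λ q) {x : E} (hx : q x x ∈ Λ) : omegaF σ ε q x x = 0 :=
  h.hmax _ hx

/-- The orthogonal complement of a subspace, as a subspace. -/
def perp (h : FS σ ε Λ q) (U : Submodule F E) : Submodule F E where
  carrier := perpSet σ ε q (U : Set E)
  add_mem' := by
    intro a b ha hb u hu
    rw [h.add_left, ha u hu, hb u hu, add_zero]
  zero_mem' := by
    intro u _
    have := h.smul_left 0 0 u
    simpa using this
  smul_mem' := by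
    intro c x hx u hu
    rw [h.smul_left, hx u hu, mul_zero]

lemma mem_perp (h : FS σ ε Λ q) {U : Submodule F E} {x : E} :
    x ∈ h.perp U ↔ ∀ u ∈ U, omegaF σ ε q x u = 0 := Iff.rfl

/-- The kernel `K(E)`. -/
def ker (h : FS σ ε Λ q) : Submodule F E := h.perp ⊤

lemma ker_left (h : FS σ ε Λ q) {x : E} (hx : x ∈ h.ker) (y : E) : omegaF σ ε q x y = 0 :=
  hx y trivial

lemma ker_right (h : FS σ ε Λ q) {x : E} (hx : x ∈ h.ker) (y : E) : omegaF σ ε q y x = 0 :=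
  h.symm_zero (h.ker_left hx y)

lemma mem_ker_of_right (h : FS σ ε Λ q) {x : E} (hx : ∀ y, omegaF σ ε q y x = 0) : x ∈ h.ker :=
  fun y _ => h.symm_zero (hx y)

/-- Modulo `K(E)` the form is nondegenerate: every linear functional vanishing on `K(E)` is of the
form `ω(z, ·)`. Hence a vector outside `S + K(E)` is detected by some `z` orthogonal to `S`. -/
lemma exists_dual (h : FS σ ε Λ q) [FiniteDimensional F E] (S : Submodule F E) (w : E)
    (hw : w ∉ S ⊔ h.ker) :
    ∃ z : E, (∀ s ∈ S, omegaF σ ε q z s = 0) ∧ omegaF σ ε q z w = 1 := by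
  -- The functionals `ω(z, ·)` form a subspace `T`, because `σ` is surjective.
  let T : Submodule F (Module.Dual F E) :=
    { carrier := {f | ∃ z, ∀ x, f x = omegaF σ ε q z x}
      add_mem' := by
        rintro f f' ⟨z, hz⟩ ⟨z', hz'⟩
        exact ⟨z + z', fun x => by rw [h.add_left, LinearMap.add_apply, hz, hz']⟩
      zero_mem' := ⟨0, fun x => by
        have := h.smul_left 0 0 x
        simp at this
        simp [this]⟩
      smul_mem' := by
        rintro c f ⟨z, hz⟩
        exact ⟨σ c • z, fun x => by
          rw [h.smul_left, h.invol, LinearMap.smul_apply, hz, smul_eq_mul]⟩ }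
  have hT : T.dualCoannihilator ≤ h.ker := by
    intro x hx
    rw [Submodule.mem_dualCoannihilator] at hx
    refine h.mem_ker_of_right fun y => ?_
    exact hx
      { toFun := fun x => omegaF σ ε q y x
        map_add' := h.add_right y
        map_smul' := fun a x => by rw [h.smul_right, mul_comm]; rfl } ⟨y, fun _ => rfl⟩
  obtain ⟨f, hfw, hfS⟩ := Submodule.exists_le_ker_of_notMem hw
  have hfT : f ∈ T := by
    rw [← Subspace.dualCoannihilator_dualAnnihilator_eq (W := T), Submodule.mem_dualAnnihilator]
    exact fun x hx => hfS (Submodule.mem_sup_right (hT hx))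
  obtain ⟨z, hz⟩ := T.smul_mem (f w)⁻¹ hfT
  refine ⟨z, fun s hs => ?_, ?_⟩
  · rw [← hz, LinearMap.smul_apply, show f s = 0 from hfS (Submodule.mem_sup_left hs), smul_zero]
  · rw [← hz, LinearMap.smul_apply, smul_eq_mul, inv_mul_cancel₀ hfw]

/-- The functional `ω(v, ·)`. -/
def form (h : FS σ ε Λ q) (v : E) : E →ₗ[F] F where
  toFun := fun x => omegaF σ ε q v x
  map_add' := h.add_right v
  map_smul' := fun a x => by rw [h.smul_right, mul_comm]; rfl

@[simp] lemma form_apply (h : FS σ ε Λ q) (v x : E) : h.form v x = omegaF σ ε q v x := rfl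

/-! ### Elementary isometries -/

/-- An isometry fixing `K(E)` pointwise is bijective, since its null space lies in `K(E)`. -/
lemma exists_equiv (h : FS σ ε Λ q) [FiniteDimensional F E] (g : E →ₗ[F] E)
    (hg : IsIsom σ ε Λ q g) (hK : ∀ x ∈ h.ker, g x = x) :
    ∃ g' : E ≃ₗ[F] E, g'.toLinearMap = g := by
  have inj : Function.Injective g := by
    rw [injective_iff_map_eq_zero]
    intro x hx
    rw [← hK x, hx]
    intro y _
    rw [← hg.1, hx]
    simpa using h.smul_left 0 0 (g y)
  exact ⟨LinearEquiv.ofInjectiveEndo g inj, by ext; rfl⟩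

/-- The quasi-reflection along `v`: it sends `x` to `x + v` whenever `ω(v,x) = b`. -/
lemma exists_reflection (h : FS σ ε Λ q) [FiniteDimensional F E] (v : E) (b : F) (hb : b ≠ 0)
    (hv : q v v + b ∈ Λ) :
    ∃ g : E ≃ₗ[F] E, IsIsom σ ε Λ q g.toLinearMap ∧
      ∀ x, g x = x + (b⁻¹ * omegaF σ ε q v x) • v := by
  let g : E →ₗ[F] E := LinearMap.id + (b⁻¹ • h.form v).smulRight v
  have gx : ∀ x, g x = x + (b⁻¹ * omegaF σ ε q v x) • v := fun x => by simp [g]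
  have hσb : σ b ≠ 0 := by simpa using hb
  have hvv : omegaF σ ε q v v = -(b + ε * σ b) := by
    have := h.hmax _ hv
    rw [map_add] at this
    simp only [omegaF]
    linear_combination this
  have isom : IsIsom σ ε Λ q g := by
    refine ⟨fun x y => ?_, fun x => ?_⟩
    · rw [gx, gx, h.add_left, h.add_right, h.add_right, h.smul_left, h.smul_left, h.smul_right,
        h.smul_right, hvv, h.symm x v, map_mul, map_inv₀]
      field_simp
      ring
    · rw [gx]
      have e := h.q_add x ((b⁻¹ * omegaF σ ε q v x) • v)
      have e2 := Λ.add_mem e (h.stable (b⁻¹ * omegaF σ ε q v x) _ hv)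
      rw [h.sesq.2.2, h.smul_left] at e2
      convert e2 using 1
      rw [map_mul, map_inv₀]
      field_simp
      ring
  obtain ⟨g', hg'⟩ := h.exists_equiv g isom
    (fun x hx => by rw [gx, h.ker_right hx]; simp)
  refine ⟨g', hg' ▸ isom, fun x => ?_⟩
  rw [← gx, ← hg']; rfl

/-- The Eichler transformation of an isotropic `v` and a vector `z ⊥ v`: on vectors orthogonal to
`v` it is `x ↦ x + ω(z,x) v`. -/
lemma exists_eichler (h : FS σ ε Λ q) [FiniteDimensional F E] (v z : E) (hv : q v v ∈ Λ)
    (hzv : omegaF σ ε q z v = 0) :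
    ∃ g : E ≃ₗ[F] E, IsIsom σ ε Λ q g.toLinearMap ∧
      ∀ x, omegaF σ ε q v x = 0 → g x = x + omegaF σ ε q z x • v := by
  -- The coefficients of `ω(v,x)` are forced by the invariance of `ω`.
  let g : E →ₗ[F] E := LinearMap.id + (h.form z + (-σ (q z z)) • h.form v).smulRight v
    + ((-σ ε) • h.form v).smulRight z
  have gx : ∀ x, g x = x + ((omegaF σ ε q z x - σ (q z z) * omegaF σ ε q v x) • v
      + (-σ ε * omegaF σ ε q v x) • z) := fun x => by
    simp only [g, LinearMap.add_apply, LinearMap.smulRight_apply, LinearMap.smul_apply,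
      form_apply, LinearMap.id_apply, smul_eq_mul, neg_mul, add_assoc, sub_eq_add_neg]
  have hvv := h.omega_self_of_mem hv
  have hvz := h.symm_zero hzv
  have hzz : omegaF σ ε q z z = q z z + ε * σ (q z z) := rfl
  have isom : IsIsom σ ε Λ q g := by
    refine ⟨fun x y => ?_, fun x => ?_⟩
    · rw [gx, gx]
      simp only [h.add_left, h.add_right, h.smul_left, h.smul_right, hvv, hvz, hzv, hzz,
        h.symm x v, h.symm x z, map_mul, map_neg, map_sub, h.invol]
      generalize omegaF σ ε q z x = s
      generalize omegaF σ ε q v x = t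
      generalize omegaF σ ε q z y = s'
      generalize omegaF σ ε q v y = t'
      generalize q z z = c
      linear_combination (-(σ s) * t' + σ t * t' * (c + ε * σ c)) * h.unit
    · rw [gx]
      set s := omegaF σ ε q z x with hs
      set t := omegaF σ ε q v x with ht
      set c := q z z with hc
      set y := (s - σ c * t) • v + (-σ ε * t) • z with hy
      have e1 := h.q_add x y
      have e2 := h.q_add ((-σ ε * t) • z) ((s - σ c * t) • v)
      have e3 := h.stable (s - σ c * t) _ hv
      have e4 := h.hmin (σ s * t)
      have e5 : omegaF σ ε q y x = σ (s - σ c * t) * t + σ (-σ ε * t) * s := by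
        rw [hy, h.add_left, h.smul_left, h.smul_left]
      rw [add_comm ((-σ ε * t) • z), ← hy, h.sesq.2.2, h.sesq.2.2, h.smul_left, h.smul_right,
        hvz, ← hc] at e2
      rw [e5] at e1
      convert Λ.add_mem e1 (Λ.add_mem e2 (Λ.add_mem e3 e4)) using 1
      simp only [map_mul, map_neg, map_sub, h.invol]
      linear_combination (c * σ t * t) * h.unit
  obtain ⟨g', hg'⟩ := h.exists_equiv g isom
    (fun x hx => by rw [gx, h.ker_right hx, h.ker_right hx]; simp)
  refine ⟨g', hg' ▸ isom, fun x hx => ?_⟩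
  have := gx x
  rw [hx] at this
  rw [← hg'] at this
  simpa using this

/-! ### Enlarging the intersection -/

/-- One step of the induction: if `W₁` is not contained in `W₂`, some isometry fixing `U` and
`W₁ ∩ W₂` pointwise sends a vector of `W₁` to a vector of `W₂` outside `W₁`. -/
lemma exists_move (h : FS σ ε Λ q) [FiniteDimensional F E] (U W₁ W₂ : Submodule F E)
    (hU : IsIsotropic σ ε q (Λ : Set F) U)
    (hW₁ : IsIsotropic σ ε q (Λ : Set F) W₁)
    (hW₂ : IsIsotropic σ ε q (Λ : Set F) W₂)
    (hRW₁ : radSet σ ε q (Λ : Set F) ⊆ (W₁ : Set E))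
    (hRW₂ : radSet σ ε q (Λ : Set F) ⊆ (W₂ : Set E))
    (hdim : Module.finrank F W₁ = Module.finrank F W₂)
    (hsum₁ : W₁ ⊔ h.perp U = ⊤) (hsum₂ : W₂ ⊔ h.perp U = ⊤) (hne : ¬ W₁ ≤ W₂) :
    ∃ g : E ≃ₗ[F] E, IsIsom σ ε Λ q g.toLinearMap ∧ (∀ u ∈ U, g u = u) ∧
      (∀ d ∈ W₁ ⊓ W₂, g d = d) ∧ ∃ w ∈ W₁, g w ∈ W₂ ∧ g w ∉ W₁ := by
  have partner : ∀ w ∈ W₁, ∃ w' ∈ W₂, w' - w ∈ h.perp U := by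
    intro w _
    obtain ⟨w', hw', p, hp, e⟩ := Submodule.mem_sup.1 (hsum₂ ▸ Submodule.mem_top : w ∈ _)
    refine ⟨w', hw', ?_⟩
    rw [← e, show w' - (w' + p) = -p by abel]
    exact neg_mem hp
  by_cases hgood : ∃ w₁ ∈ W₁, ∃ w₂ ∈ W₂, w₂ - w₁ ∈ h.perp U ∧ omegaF σ ε q w₂ w₁ ≠ 0
  · obtain ⟨w₁, h₁, w₂, h₂, hp, hb⟩ := hgood
    have hv : q (w₂ - w₁) (w₂ - w₁) + omegaF σ ε q w₂ w₁ ∈ Λ := by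
      have e := h.q_add ((-1 : F) • w₁) w₂
      have e1 := h.isotropic_smul (-1) (hW₁.2 w₁ h₁)
      have e2 := hW₂.2 w₂ h₂
      rw [h.smul_right, neg_one_smul, ← sub_eq_neg_add] at e
      rw [neg_one_smul] at e1
      convert Λ.add_mem e (Λ.add_mem e1 e2) using 1
      ring
    obtain ⟨g, hg, gx⟩ := h.exists_reflection _ _ hb hv
    refine ⟨g, hg, fun u hu => ?_, fun d hd => ?_, w₁, h₁, ?_⟩
    · rw [gx, hp u hu]; simp
    · rw [gx, h.sub_left, hW₂.1 _ h₂ _ hd.2, hW₁.1 _ h₁ _ hd.1]; simp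
    · have e : g w₁ = w₂ := by
        rw [gx, h.sub_left, hW₁.1 _ h₁ _ h₁, sub_zero, inv_mul_cancel₀ hb]; simp
      rw [e]
      exact ⟨h₂, fun hc => hb (hW₁.1 _ hc _ h₁)⟩
  push Not at hgood
  -- It remains to find a compatible pair to which an Eichler transformation applies.
  suffices H : ∃ w₁ ∈ W₁, ∃ w₂ ∈ W₂, w₂ ∉ W₁ ∧ w₂ - w₁ ∈ h.perp U ∧
      w₁ ∉ (W₁ ⊓ W₂ ⊔ U ⊔ F ∙ (w₂ - w₁)) ⊔ h.ker by
    obtain ⟨w₁, h₁, w₂, h₂, h₂', hp, hn⟩ := H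
    obtain ⟨z, hz, hz1⟩ := h.exists_dual _ _ hn
    have hw := hgood w₁ h₁ w₂ h₂ hp
    have hv : q (w₂ - w₁) (w₂ - w₁) ∈ Λ := by
      rw [sub_eq_neg_add, ← neg_one_smul F w₁]
      refine h.isotropic_add (h.isotropic_smul _ (hW₁.2 w₁ h₁)) (hW₂.2 w₂ h₂) ?_
      rw [h.smul_right, hw, zero_mul]
    obtain ⟨g, hg, gx⟩ := h.exists_eichler (w₂ - w₁) z hv
      (hz _ (Submodule.mem_sup_right (Submodule.mem_span_singleton_self _)))
    refine ⟨g, hg, fun u hu => ?_, fun d hd => ?_, w₁, h₁, ?_⟩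
    · rw [gx u (hp u hu), hz u (Submodule.mem_sup_left (Submodule.mem_sup_right hu))]; simp
    · rw [gx d, hz d (Submodule.mem_sup_left (Submodule.mem_sup_left hd))]
      · simp
      · rw [h.sub_left, hW₂.1 _ h₂ _ hd.2, hW₁.1 _ h₁ _ hd.1, sub_zero]
    · have e : g w₁ = w₂ := by
        rw [gx, hz1]
        · simp
        · rw [h.sub_left, hw, hW₁.1 _ h₁ _ h₁, sub_zero]
      rw [e]
      exact ⟨h₂, h₂'⟩
  have decomp : ∀ w₁ v : E, w₁ ∈ (W₁ ⊓ W₂ ⊔ U ⊔ F ∙ v) ⊔ h.ker →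
      ∃ d ∈ W₁ ⊓ W₂, ∃ u ∈ U, ∃ c : F, ∃ k ∈ h.ker, w₁ = d + u + c • v + k := by
    intro w₁ v hw
    obtain ⟨x, hx, k, hk, rfl⟩ := Submodule.mem_sup.1 hw
    obtain ⟨y, hy, t, ht, rfl⟩ := Submodule.mem_sup.1 hx
    obtain ⟨d, hd, u, hu, rfl⟩ := Submodule.mem_sup.1 hy
    obtain ⟨c, rfl⟩ := Submodule.mem_span_singleton.1 ht
    exact ⟨d, hd, u, hu, c, k, hk, rfl⟩
  by_cases hP : W₁ ⊓ h.perp U = W₂ ⊓ h.perp U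
  · obtain ⟨w₁, h₁, h₁'⟩ := SetLike.not_le_iff_exists.1 hne
    obtain ⟨w₂, h₂, hp⟩ := partner w₁ h₁
    refine ⟨w₁, h₁, w₂, h₂, fun hc => ?_, hp, fun hc => ?_⟩
    · have : w₂ - w₁ ∈ W₂ ⊓ h.perp U := hP ▸ ⟨sub_mem hc h₁, hp⟩
      exact h₁' (by simpa using sub_mem h₂ this.1)
    · -- All summands but `d` lie in `U^⊥`, so `w₁ - d ∈ W₁ ∩ U^⊥ ⊆ W₂`.
      obtain ⟨d, hd, u, hu, c, k, hk, e⟩ := decomp _ _ hc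
      have hm : w₁ - d ∈ h.perp U := by
        have : w₁ - d = u + c • (w₂ - w₁) + k := by
          nth_rewrite 1 [e]; abel
        rw [this]
        refine add_mem (add_mem (fun u' hu' => hU.1 u hu u' hu') (Submodule.smul_mem _ _ hp))
          (fun y _ => h.ker_left hk y)
      have : w₁ - d ∈ W₂ ⊓ h.perp U := hP ▸ ⟨sub_mem h₁ hd.1, hm⟩
      exact h₁' (by simpa using add_mem this.1 hd.2)
  · have hdimP : Module.finrank F ↥(W₁ ⊓ h.perp U) = Module.finrank F ↥(W₂ ⊓ h.perp U) := by
      have e1 := Submodule.finrank_sup_add_finrank_inf_eq W₁ (h.perp U)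
      have e2 := Submodule.finrank_sup_add_finrank_inf_eq W₂ (h.perp U)
      rw [hsum₁] at e1
      rw [hsum₂] at e2
      omega
    have n1 : ¬ W₁ ⊓ h.perp U ≤ W₂ ⊓ h.perp U := fun hc =>
      hP (Submodule.eq_of_le_of_finrank_eq hc hdimP)
    have n2 : ¬ W₂ ⊓ h.perp U ≤ W₁ ⊓ h.perp U := fun hc =>
      hP (Submodule.eq_of_le_of_finrank_eq hc hdimP.symm).symm
    obtain ⟨w₁, h₁, h₁'⟩ := SetLike.not_le_iff_exists.1 n1
    obtain ⟨w₂, h₂, h₂'⟩ := SetLike.not_le_iff_exists.1 n2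
    have h₁'' : w₁ ∉ W₂ := fun hc => h₁' ⟨hc, h₁.2⟩
    have h₂'' : w₂ ∉ W₁ := fun hc => h₂' ⟨hc, h₂.2⟩
    refine ⟨w₁, h₁.1, w₂, h₂.1, h₂'', sub_mem h₂.2 h₁.2, fun hc => ?_⟩
    obtain ⟨d, hd, u, hu, c, k, hk, e⟩ := decomp _ _ hc
    -- Both `(y, y')` and `(y, y' + w₂)` are compatible pairs.
    have hw2 : ∀ y ∈ W₁, omegaF σ ε q w₂ y = 0 := by
      intro y hy
      obtain ⟨y', hy', hp⟩ := partner y hy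
      have a1 := hgood y hy y' hy' hp
      have a2 := hgood y hy (y' + w₂) (add_mem hy' h₂.1) (by
        rw [add_sub_right_comm]; exact add_mem hp h₂.2)
      rwa [h.add_left, a1, zero_add] at a2
    have hu_eq : u = (w₁ - d - c • (w₂ - w₁)) - k := by
      nth_rewrite 1 [e]; abel
    -- `u` is orthogonal to `W₁` and to `U^⊥`, which together span `E`.
    have huK : ∀ y, omegaF σ ε q y u = 0 := by
      intro y
      obtain ⟨y₁, hy₁, p, hp, rfl⟩ := Submodule.mem_sup.1 (hsum₁ ▸ Submodule.mem_top : y ∈ _)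
      rw [h.add_left, hp u hu, add_zero]
      apply h.symm_zero
      rw [hu_eq, h.sub_left, h.sub_left, h.sub_left, h.smul_left, h.sub_left, hw2 _ hy₁,
        hW₁.1 _ h₁.1 _ hy₁, hW₁.1 _ hd.1 _ hy₁, h.ker_left hk]
      simp
    have huR : u ∈ radSet σ ε q (Λ : Set F) := ⟨huK, hU.2 u hu⟩
    have hu1 : u ∈ W₁ := hRW₁ huR
    have hu2 : u ∈ W₂ := hRW₂ huR
    -- `k` is a combination of `w₁`, `w₂` and a vector of `W₁ ∩ W₂`, hence isotropic.
    have hk_eq : k = ((1 + c) • w₁ - (d + u)) + (-c) • w₂ := by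
      have : k = w₁ - (d + u + c • (w₂ - w₁)) := by
        nth_rewrite 1 [e]; abel
      rw [this]; module
    have hA : (1 + c) • w₁ - (d + u) ∈ W₁ :=
      sub_mem (Submodule.smul_mem _ _ h₁.1) (add_mem hd.1 hu1)
    have hkR : k ∈ radSet σ ε q (Λ : Set F) := by
      refine ⟨h.ker_right hk, ?_⟩
      rw [hk_eq]
      refine h.isotropic_add (hW₁.2 _ hA) (h.isotropic_smul _ (hW₂.2 _ h₂.1)) ?_
      rw [h.smul_left, hw2 _ hA, mul_zero]
    by_cases hc0 : c = 0
    · have : w₁ = d + u + k := by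
        nth_rewrite 1 [e]; simp [hc0]
      exact h₁'' (this ▸ add_mem (add_mem hd.2 hu2) (hRW₂ hkR))
    · have hm : (-c) • w₂ ∈ W₁ := by
        have : (-c) • w₂ = k - ((1 + c) • w₁ - (d + u)) := by
          nth_rewrite 1 [hk_eq]; abel
        rw [this]; exact sub_mem (hRW₁ hkR) hA
      exact h₂'' ((Submodule.smul_mem_iff _ (neg_ne_zero.2 hc0)).1 hm)

/-- The theorem when `Λ` is stable under `x ↦ σ a * x * a`; the codimension of `W₁ ∩ W₂` in `W₁`
is at most `n`. -/
lemma witt (h : FS σ ε Λ q) [FiniteDimensional F E] (U W₂ : Submodule F E)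
    (hU : IsIsotropic σ ε q (Λ : Set F) U)
    (hW₂ : IsIsotropic σ ε q (Λ : Set F) W₂)
    (hRU : radSet σ ε q (Λ : Set F) ⊆ (U : Set E))
    (hRW₂ : radSet σ ε q (Λ : Set F) ⊆ (W₂ : Set E))
    (hsum₂ : W₂ ⊔ h.perp U = ⊤) (n : ℕ) :
    ∀ W₁ : Submodule F E, IsIsotropic σ ε q (Λ : Set F) W₁ →
      radSet σ ε q (Λ : Set F) ⊆ (W₁ : Set E) →
      Module.finrank F W₁ = Module.finrank F W₂ → W₁ ⊔ h.perp U = ⊤ →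
      Module.finrank F W₁ ≤ Module.finrank F ↥(W₁ ⊓ W₂) + n →
      ∃ g : E ≃ₗ[F] E, IsIsom σ ε Λ q g.toLinearMap ∧
        Submodule.map g.toLinearMap W₁ = W₂ ∧ ∀ u ∈ U, g u = u := by
  induction n with
  | zero =>
    intro W₁ _ _ hdim _ hn
    have e : W₁ ⊓ W₂ = W₁ := Submodule.eq_of_le_of_finrank_le inf_le_left hn
    have e' : W₁ = W₂ := Submodule.eq_of_le_of_finrank_eq (inf_eq_left.1 e) hdim
    exact ⟨LinearEquiv.refl F E, ⟨fun _ _ => rfl, fun v => by simp⟩, by simp [e'], fun _ _ => rfl⟩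
  | succ n ih =>
    intro W₁ hW₁ hRW₁ hdim hsum₁ hn
    by_cases hle : W₁ ≤ W₂
    · have e' : W₁ = W₂ := Submodule.eq_of_le_of_finrank_eq hle hdim
      exact ⟨LinearEquiv.refl F E, ⟨fun _ _ => rfl, fun v => by simp⟩, by simp [e'],
        fun _ _ => rfl⟩
    obtain ⟨g, hg, gU, gD, w, hw, hgw, hgw'⟩ :=
      h.exists_move U W₁ W₂ hU hW₁ hW₂ hRW₁ hRW₂ hdim hsum₁ hsum₂ hle
    have hfin : Module.finrank F ↥(Submodule.map g.toLinearMap W₁) = Module.finrank F W₁ :=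
      LinearEquiv.finrank_map_eq g W₁
    have hlt : W₁ ⊓ W₂ < Submodule.map g.toLinearMap W₁ ⊓ W₂ := by
      refine lt_of_le_of_ne (fun d hd => ⟨⟨d, hd.1, gD d hd⟩, hd.2⟩) fun hc => hgw' ?_
      have : g w ∈ Submodule.map g.toLinearMap W₁ ⊓ W₂ := ⟨⟨w, hw, rfl⟩, hgw⟩
      rw [← hc] at this
      exact this.1
    have hlt' := Submodule.finrank_lt_finrank_of_lt hlt
    obtain ⟨g', hg', gW, gU'⟩ := ih (Submodule.map g.toLinearMap W₁) (by
        refine ⟨?_, ?_⟩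
        · rintro _ ⟨x, hx, rfl⟩ _ ⟨y, hy, rfl⟩
          rw [hg.1]; exact hW₁.1 x hx y hy
        · rintro _ ⟨x, hx, rfl⟩
          have := Λ.add_mem (hg.2 x) (hW₁.2 x hx)
          rwa [sub_add_cancel] at this)
      (fun r hr => ⟨r, hRW₁ hr, gU r (hRU hr)⟩) (hfin.trans hdim) (by
        rw [eq_top_iff]
        intro y _
        obtain ⟨a, ha, p, hp, e⟩ :=
          Submodule.mem_sup.1 (hsum₁ ▸ Submodule.mem_top : g.symm y ∈ _)
        refine Submodule.mem_sup.2 ⟨g a, ⟨a, ha, rfl⟩, g p, fun u hu => ?_, ?_⟩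
        · have := hg.1 p u
          rw [show g.toLinearMap u = u from gU u hu] at this
          exact this.trans (hp u hu)
        · rw [← map_add, e, LinearEquiv.apply_symm_apply]) (by omega)
    refine ⟨g.trans g', ⟨fun x y => ?_, fun x => ?_⟩, ?_, fun u hu => ?_⟩
    · exact (hg'.1 (g x) (g y)).trans (hg.1 x y)
    · have := Λ.add_mem (hg'.2 (g x)) (hg.2 x)
      simpa using this
    · rw [LinearEquiv.coe_trans, Submodule.map_comp, gW]
    · rw [LinearEquiv.trans_apply, gU u hu, gU' u hu]

end FS

/-! ### The general case -/

/-- Let `(E,q)` be a formed space, `U, W₁, W₂` isotropic subspaces containing `R(E)` with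
`dim W₁ = dim W₂` and `W₁ + U^⊥ = W₂ + U^⊥ = E`. Then there is a bijective isometry `g`
of `E` sending `W₁` to `W₂` and restricting to the identity on `U`. -/
theorem stmt17 {F E : Type*} [Field F] [AddCommGroup E] [Module F E]
    [FiniteDimensional F E]
    (σ : F →+* F) (hσ : ∀ a : F, σ (σ a) = a)
    (ε : F) (hε : ε * σ ε = 1)
    (Λ : AddSubgroup F)
    (hmin : ∀ a : F, a - ε * σ a ∈ Λ)
    (hmax : ∀ a ∈ Λ, a + ε * σ a = 0)
    (q : E → E → F) (hq : IsSesq σ q)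
    (U W₁ W₂ : Submodule F E)
    (hU : IsIsotropic σ ε q (Λ : Set F) U)
    (hW₁ : IsIsotropic σ ε q (Λ : Set F) W₁)
    (hW₂ : IsIsotropic σ ε q (Λ : Set F) W₂)
    (hRU : radSet σ ε q (Λ : Set F) ⊆ (U : Set E))
    (hRW₁ : radSet σ ε q (Λ : Set F) ⊆ (W₁ : Set E))
    (hRW₂ : radSet σ ε q (Λ : Set F) ⊆ (W₂ : Set E))
    (hdim : Module.finrank F W₁ = Module.finrank F W₂)
    (hsum₁ : ∀ v : E, ∃ w ∈ W₁, ∃ p ∈ perpSet σ ε q (U : Set E), v = w + p)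
    (hsum₂ : ∀ v : E, ∃ w ∈ W₂, ∃ p ∈ perpSet σ ε q (U : Set E), v = w + p) :
    ∃ g : E ≃ₗ[F] E,
      (∀ v v' : E, omegaF σ ε q (g v) (g v') = omegaF σ ε q v v') ∧
      (∀ v : E, q (g v) (g v) - q v v ∈ Λ) ∧
      Submodule.map g.toLinearMap W₁ = W₂ ∧
      ∀ u ∈ U, g u = u := by
  -- The largest subgroup of `Λ` stable under all `x ↦ σ a * x * a`.
  let Λ' : AddSubgroup F :=
    { carrier := {x | ∀ a, σ a * x * a ∈ Λ}
      add_mem' := fun {x y} hx hy a => by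
        have := Λ.add_mem (hx a) (hy a)
        rwa [← add_mul, ← mul_add] at this
      zero_mem' := fun a => by simp
      neg_mem' := fun {x} hx a => by simpa using Λ.neg_mem (hx a) }
  have hle : ∀ x ∈ Λ', x ∈ Λ := fun x hx => by simpa using hx 1
  have h : FS σ ε Λ' q :=
    { invol := hσ
      unit := hε
      hmin := fun a b => by
        have := hmin (σ b * a * b)
        simp only [map_mul, hσ] at this
        convert this using 1; ring
      hmax := fun a ha => hmax a (hle a ha)
      stable := fun a x hx b => by
        have := hx (a * b)
        rw [map_mul] at this
        convert this using 1; ring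
      sesq := hq }
  have iso : ∀ V : Submodule F E, IsIsotropic σ ε q (Λ : Set F) V →
      IsIsotropic σ ε q (Λ' : Set F) V := by
    refine fun V hV => ⟨hV.1, fun u hu a => ?_⟩
    rw [← hq.2.2]
    exact hV.2 _ (V.smul_mem a hu)
  have rad : radSet σ ε q (Λ' : Set F) ⊆ radSet σ ε q (Λ : Set F) :=
    fun v hv => ⟨hv.1, hle _ hv.2⟩
  have top : ∀ W : Submodule F E,
      (∀ v : E, ∃ w ∈ W, ∃ p ∈ perpSet σ ε q (U : Set E), v = w + p) → W ⊔ h.perp U = ⊤ := by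
    intro W hW
    rw [eq_top_iff]
    intro v _
    obtain ⟨w, hw, p, hp, e⟩ := hW v
    exact Submodule.mem_sup.2 ⟨w, hw, p, hp, e.symm⟩
  obtain ⟨g, hg, gW, gU⟩ := h.witt U W₂ (iso U hU) (iso W₂ hW₂) (rad.trans hRU) (rad.trans hRW₂)
    (top W₂ hsum₂) (Module.finrank F W₁) W₁ (iso W₁ hW₁) (rad.trans hRW₁) hdim (top W₁ hsum₁)
    (Nat.le_add_left _ _)
  exact ⟨g, hg.1, fun v => hle _ (hg.2 v), gW, gU⟩
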